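/- For every (t,k), any strategies (γ^k, γ^{-k}) and any realization (i_t^k, u_t^k) of positive probability, the private posterior process is conditionally Markov with respect to the common data: ℙ^{γ^k,γ^{-k}}(Ξ_{t+1}^k[I_{t+1}^k] = ξ' | I_t^k = i_t^k, U_t^k = u_t^k) = ℙ^{γ^{-k}}(Ξ_{t+1}^k = ξ' | Ξ_t^k = ξ_t^k, Δ_t^{(K)} = δ_t^{(K)}, U_t^k = u_t^k), where ξ_t^k = Ξ_t^k[i_t^k] and i_t^k = {δ_t^{(K)}, λ_t^k}; moreover this transition probability does not depend on the strategy γ^k of station k. -/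

import Mathlib

/-!
Decentralized stochastic network with `T`-step delayed sharing information patterns
(canonical finite-path-space formalization).

Times are 0-based: the paper's horizon `{1,…,n}` is encoded as `{0,…,n}` here
(so the paper's terminal time `n` is `n`, and paper time `t` corresponds to index `t-1`).

The sample space is the (finite) space of state/observation trajectories; given a
strategy profile the actions are determined recursively, and the probability of a
trajectory is the product of the Markovian kernels.  All posteriors (the private
posterior `Ξ` and the centralized posteriors `Π`, `Θ`) are elementary conditional
probabilities on this finite space.
-/

open Finset
open scoped BigOperators Classical

namespace DelayedSharing

/-- Canonical sample space: trajectories of states and observations over times `0,…,n`. -/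
abbrev Traj (n : ℕ) (X : Type) {K : ℕ} (Y : Fin K → Type) : Type :=
  (Fin (n + 1) → X) × (Fin (n + 1) → ∀ k, Y k)

/-- Clamped index into the horizon `{0,…,n}`. -/
def idx (n t : ℕ) : Fin (n + 1) := ⟨min t n, Nat.lt_succ_of_le (Nat.min_le_right t n)⟩

/-- A strategy profile: station `k`'s map, at each time, from full observation/action
histories to an action in the action space `U k`.  Admissibility (below) restricts the
dependence to the `T`-step delayed sharing information pattern `I_t^k`. -/
abbrev Strat {K : ℕ} (Y U : Fin K → Type) : Type :=
  ∀ k : Fin K, ℕ → (ℕ → ∀ j, Y j) → (ℕ → ∀ j, U j) → U k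

/-- A strategy of the single station `k`. -/
abbrev SStrat {K : ℕ} (Y U : Fin K → Type) (k : Fin K) : Type :=
  ℕ → (ℕ → ∀ j, Y j) → (ℕ → ∀ j, U j) → U k

variable {X : Type} {K : ℕ} {Y U : Fin K → Type}

def stateAt {n : ℕ} (ω : Traj n X Y) (t : ℕ) : X := ω.1 (idx n t)

def obsAt {n : ℕ} (ω : Traj n X Y) (t : ℕ) (k : Fin K) : Y k := ω.2 (idx n t) k

/-- `γ` is admissible for the `T`-step delayed sharing pattern: `γ k t` depends only on
`I_t^k = {Δ_t^{(K)}, Λ_t^k}`, i.e. on all stations' observations/actions up to time `t-T`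
(0-based: times `s` with `s + T ≤ t`), own observations up to `t` and own actions up to
`t-1`. -/
def Admissible (T : ℕ) (γ : Strat Y U) : Prop :=
  ∀ (k : Fin K) (t : ℕ) (y y' : ℕ → ∀ j, Y j) (u u' : ℕ → ∀ j, U j),
    (∀ s j, s + T ≤ t → y s j = y' s j) →
    (∀ s j, s + T ≤ t → u s j = u' s j) →
    (∀ s, s ≤ t → y s k = y' s k) →
    (∀ s, s < t → u s k = u' s k) →
    γ k t y u = γ k t y' u'

/-- Admissibility of a single station's strategy. -/
def SAdmissible (T : ℕ) (k : Fin K) (g : SStrat Y U k) : Prop :=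
  ∀ (t : ℕ) (y y' : ℕ → ∀ j, Y j) (u u' : ℕ → ∀ j, U j),
    (∀ s j, s + T ≤ t → y s j = y' s j) →
    (∀ s j, s + T ≤ t → u s j = u' s j) →
    (∀ s, s ≤ t → y s k = y' s k) →
    (∀ s, s < t → u s k = u' s k) →
    g t y u = g t y' u'

/-- Replace station `k`'s strategy in the profile `γ` by `g`. -/
def updStrat (γ : Strat Y U) (k : Fin K) (g : SStrat Y U k) : Strat Y U :=
  fun j => if h : j = k then (by subst h; exact g) else γ j

/-- Station `k` uses `g₁` before time `t` and `g₂` from time `t` on. -/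
def splice {k : Fin K} (g₁ g₂ : SStrat Y U k) (t : ℕ) : SStrat Y U k :=
  fun τ => if τ < t then g₁ τ else g₂ τ

variable [∀ k, Nonempty (U k)]

/-- The actions at times `< t` generated recursively by the strategy profile `γ` from the
observation path `y`. -/
noncomputable def actUpto (γ : Strat Y U) (y : ℕ → ∀ j, Y j) : ℕ → ℕ → ∀ j, U j
  | 0 => fun _ j => Classical.arbitrary (U j)
  | t + 1 => fun s => if s = t then (fun j => γ j t y (actUpto γ y t)) else actUpto γ y t s

/-- The action profile at time `t` generated by `γ` from the observation path `y`. -/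
noncomputable def act (γ : Strat Y U) (y : ℕ → ∀ j, Y j) (t : ℕ) : ∀ j, U j :=
  fun j => γ j t y (actUpto γ y t)

/-- The realized action profile along a trajectory. -/
noncomputable def actAt {n : ℕ} (γ : Strat Y U) (ω : Traj n X Y) (t : ℕ) : ∀ j, U j :=
  act γ (fun s => ω.2 (idx n s)) t

/-- The Markovian kernels and the per-stage cost of the decentralized network (0-based):
`prior` is the PMF of the initial state; `obs0 k` the PMF of station `k`'s initial
observation given the initial state; `trans t` the transition PMF from time `t` to `t+1`
given the action profile at time `t`; `obs t k` the PMF of station `k`'s observation at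
time `t+1` given the state at `t+1` and the action profile at time `t` (the observations
of the stations being conditionally independent given these); `cost t` the per-stage
cost `ℓ(t,·,·)`. -/
structure Kernels (X : Type) {K : ℕ} (Y U : Fin K → Type) where
  prior : X → ℝ
  obs0 : ∀ k : Fin K, X → Y k → ℝ
  trans : ℕ → X → (∀ j, U j) → X → ℝ
  obs : ℕ → ∀ k : Fin K, X → (∀ j, U j) → Y k → ℝ
  cost : ℕ → X → (∀ j, U j) → ℝ

variable [Fintype X] [∀ k, Fintype (Y k)]

/-- All the kernels are genuine probability mass functions. -/
def Kernels.IsPMF (M : Kernels X Y U) : Prop :=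
  (∀ x, 0 ≤ M.prior x) ∧ (∑ x, M.prior x) = 1 ∧
  (∀ (k : Fin K) x, (∀ y, 0 ≤ M.obs0 k x y) ∧ (∑ y, M.obs0 k x y) = 1) ∧
  (∀ t x u, (∀ x', 0 ≤ M.trans t x u x') ∧ (∑ x', M.trans t x u x') = 1) ∧
  (∀ t (k : Fin K) x u, (∀ y, 0 ≤ M.obs t k x u y) ∧ (∑ y, M.obs t k x u y) = 1)

/-- The probability of a trajectory under the strategy profile `γ`: the product of the
Markovian kernels along the path, the actions being generated by `γ`. -/
noncomputable def prob (n : ℕ) (M : Kernels X Y U) (γ : Strat Y U) (ω : Traj n X Y) : ℝ :=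
  M.prior (stateAt ω 0) * (∏ k, M.obs0 k (stateAt ω 0) (obsAt ω 0 k)) *
    ∏ t ∈ Finset.range n,
      (M.trans t (stateAt ω t) (actAt γ ω t) (stateAt ω (t + 1)) *
        ∏ k, M.obs t k (stateAt ω (t + 1)) (actAt γ ω t) (obsAt ω (t + 1) k))

/-- `ℙ^γ(A)` on the canonical finite path space. -/
noncomputable def Pr (n : ℕ) (M : Kernels X Y U) (γ : Strat Y U) (A : Traj n X Y → Prop) : ℝ :=
  ∑ ω : Traj n X Y, if A ω then prob n M γ ω else 0

/-- Conditional probability `ℙ^γ(A | B)`. -/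
noncomputable def condPr (n : ℕ) (M : Kernels X Y U) (γ : Strat Y U)
    (A B : Traj n X Y → Prop) : ℝ :=
  Pr n M γ (fun ω => A ω ∧ B ω) / Pr n M γ B

/-- The expected total cost `J_n(γ) = 𝔼^γ [Σ_t ℓ(t, X_t, U_t^{(K)})]`. -/
noncomputable def J (n : ℕ) (M : Kernels X Y U) (γ : Strat Y U) : ℝ :=
  ∑ ω : Traj n X Y, prob n M γ ω *
    ∑ t ∈ Finset.range (n + 1), M.cost t (stateAt ω t) (actAt γ ω t)

/-- The conditional cost-to-go from time `t` given the event `B`: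
`𝔼^γ [Σ_{τ=t}^n ℓ(τ, X_τ, U_τ^{(K)}) | B]`. -/
noncomputable def Jcond (n : ℕ) (M : Kernels X Y U) (γ : Strat Y U) (t : ℕ)
    (B : Traj n X Y → Prop) : ℝ :=
  (∑ ω : Traj n X Y,
      if B ω then prob n M γ ω * ∑ τ ∈ Finset.Icc t n, M.cost τ (stateAt ω τ) (actAt γ ω τ)
      else 0) / Pr n M γ B

/-- Person-by-person optimality of the profile `γo`. -/
noncomputable def PbPOptimal (n T : ℕ) (M : Kernels X Y U) (γo : Strat Y U) : Prop :=
  Admissible T γo ∧ ∀ (k : Fin K) (g : SStrat Y U k),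
    Admissible T (updStrat γo k g) → J n M γo ≤ J n M (updStrat γo k g)

/-- Person-by-person optimality of `γo` within the class `P` of strategy profiles. -/
noncomputable def PbPOptimalIn (n T : ℕ) (M : Kernels X Y U) (P : Strat Y U → Prop)
    (γo : Strat Y U) : Prop :=
  Admissible T γo ∧ P γo ∧ ∀ (k : Fin K) (g : SStrat Y U k),
    Admissible T (updStrat γo k g) → P (updStrat γo k g) →
      J n M γo ≤ J n M (updStrat γo k g)

/-! ### Information events: realizations of `I_t^k`, `Δ_t^{(K)}`, `Λ_t^k` -/

/-- The event `{I_t^k = i_t^k}`, where the realization `i_t^k = {δ_t^{(K)}, λ_t^k}` is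
recorded by total functions `iy, iu` (only the coordinates of the information pattern
matter). -/
def InfoEq {n : ℕ} (T : ℕ) (γ : Strat Y U) (k : Fin K) (t : ℕ)
    (iy : ℕ → ∀ j, Y j) (iu : ℕ → ∀ j, U j) (ω : Traj n X Y) : Prop :=
  (∀ s j, s + T ≤ t → obsAt ω s j = iy s j) ∧
  (∀ s j, s + T ≤ t → actAt γ ω s j = iu s j) ∧
  (∀ s, s ≤ t → obsAt ω s k = iy s k) ∧
  (∀ s, s < t → actAt γ ω s k = iu s k)

/-- The event `{Δ_t^{(K)} = δ_t^{(K)}}` (common/shared data). -/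
def CommonEq {n : ℕ} (T : ℕ) (γ : Strat Y U) (t : ℕ)
    (δy : ℕ → ∀ j, Y j) (δu : ℕ → ∀ j, U j) (ω : Traj n X Y) : Prop :=
  (∀ s j, s + T ≤ t → obsAt ω s j = δy s j) ∧
  (∀ s j, s + T ≤ t → actAt γ ω s j = δu s j)

/-- The event `{Λ_t^{-k} = λ_t^{-k}}` (private data of the other stations). -/
def PrivOthersEq {n : ℕ} (T : ℕ) (γ : Strat Y U) (k : Fin K) (t : ℕ)
    (ly : ℕ → ∀ j, Y j) (lu : ℕ → ∀ j, U j) (ω : Traj n X Y) : Prop :=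
  (∀ s j, j ≠ k → s ≤ t → t < s + T → obsAt ω s j = ly s j) ∧
  (∀ s j, j ≠ k → s < t → t < s + T → actAt γ ω s j = lu s j)

/-- The event `{Λ_t^{(K)} = λ_t^{(K)}}` (private data of all stations). -/
def PrivAllEq {n : ℕ} (T : ℕ) (γ : Strat Y U) (t : ℕ)
    (ly : ℕ → ∀ j, Y j) (lu : ℕ → ∀ j, U j) (ω : Traj n X Y) : Prop :=
  (∀ s j, s ≤ t → t < s + T → obsAt ω s j = ly s j) ∧
  (∀ s j, s < t → t < s + T → actAt γ ω s j = lu s j)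

/-- Agreement of two trajectories on the common data `Δ_t^{(K)}`. -/
def CommonAgree {n : ℕ} (T : ℕ) (γ : Strat Y U) (t : ℕ) (ω ω' : Traj n X Y) : Prop :=
  (∀ s (j : Fin K), s + T ≤ t → obsAt ω s j = obsAt ω' s j) ∧
  (∀ s (j : Fin K), s + T ≤ t → actAt γ ω s j = actAt γ ω' s j)

/-- Agreement of two trajectories on station `k`'s private data `Λ_t^k`. -/
def PrivAgree {n : ℕ} (T : ℕ) (γ : Strat Y U) (k : Fin K) (t : ℕ) (ω ω' : Traj n X Y) : Prop :=
  (∀ s, s ≤ t → t < s + T → obsAt ω s k = obsAt ω' s k) ∧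
  (∀ s, s < t → t < s + T → actAt γ ω s k = actAt γ ω' s k)

/-- Agreement of two trajectories on station `k`'s information `I_t^k`. -/
def InfoAgree {n : ℕ} (T : ℕ) (γ : Strat Y U) (k : Fin K) (t : ℕ) (ω ω' : Traj n X Y) : Prop :=
  CommonAgree T γ t ω ω' ∧
  (∀ s, s ≤ t → obsAt ω s k = obsAt ω' s k) ∧
  (∀ s, s < t → actAt γ ω s k = actAt γ ω' s k)

/-! ### Posteriors -/

/-- The private posterior `Ξ_t^k[i_t^k](x, λ_t^{-k})
 = ℙ^γ(X_t = x, Λ_t^{-k} = λ_t^{-k} | I_t^k = i_t^k)`. -/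
noncomputable def Xi (n T : ℕ) (M : Kernels X Y U) (γ : Strat Y U) (k : Fin K) (t : ℕ)
    (iy : ℕ → ∀ j, Y j) (iu : ℕ → ∀ j, U j) (x : X)
    (ly : ℕ → ∀ j, Y j) (lu : ℕ → ∀ j, U j) : ℝ :=
  condPr n M γ (fun ω => stateAt ω t = x ∧ PrivOthersEq T γ k t ly lu ω)
    (InfoEq T γ k t iy iu)

/-- The centralized posterior `Π_t^{(K)}[δ_t^{(K)}](x) = ℙ^γ(X_{t-T} = x | Δ_t^{(K)} = δ)`. -/
noncomputable def PiPost (n T : ℕ) (M : Kernels X Y U) (γ : Strat Y U) (t : ℕ)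
    (δy : ℕ → ∀ j, Y j) (δu : ℕ → ∀ j, U j) (x : X) : ℝ :=
  condPr n M γ (fun ω => stateAt ω (t - T) = x) (CommonEq T γ t δy δu)

/-- The centralized posterior
`Θ_t^{γ}[δ_t^{(K)}](x, λ_t^{(K)}) = ℙ^γ(X_t = x, Λ_t^{(K)} = λ | Δ_t^{(K)} = δ)`. -/
noncomputable def ThetaPost (n T : ℕ) (M : Kernels X Y U) (γ : Strat Y U) (t : ℕ)
    (δy : ℕ → ∀ j, Y j) (δu : ℕ → ∀ j, U j) (x : X)
    (ly : ℕ → ∀ j, Y j) (lu : ℕ → ∀ j, U j) : ℝ :=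
  condPr n M γ (fun ω => stateAt ω t = x ∧ PrivAllEq T γ t ly lu ω) (CommonEq T γ t δy δu)

/-- The realization `I_t^k = i_t^k` has positive probability under `γ`. -/
noncomputable def PosInfo (n T : ℕ) (M : Kernels X Y U) (γ : Strat Y U) (k : Fin K) (t : ℕ)
    (iy : ℕ → ∀ j, Y j) (iu : ℕ → ∀ j, U j) : Prop :=
  0 < Pr n M γ (InfoEq T γ k t iy iu)

/-- The random private posterior `Ξ_t^k[I_t^k]` evaluated along the trajectory `ω`. -/
noncomputable def XiAt (n T : ℕ) (M : Kernels X Y U) (γ : Strat Y U) (k : Fin K) (t : ℕ)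
    (ω : Traj n X Y) : X → (ℕ → ∀ j, Y j) → (ℕ → ∀ j, U j) → ℝ :=
  fun x ly lu => Xi n T M γ k t (fun s => ω.2 (idx n s)) (actAt γ ω) x ly lu

/-! ### Finite parametrization of private realizations -/

variable [∀ k, DecidableEq (Y k)] [∀ k, DecidableEq (U k)] [∀ k, Fintype (U k)]
variable [∀ k, Nonempty (Y k)]

/-- Canonical (finite) set of realizations of `Λ_t^{-k}`: pairs of functions supported on
the private windows of the stations `j ≠ k` (observations at times `s ≤ t` with
`t < s + T`; actions at times `s < t` with `t < s + T`) and equal to a fixed default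
outside. -/
noncomputable def privSet (n T : ℕ) (k : Fin K) (t : ℕ) :
    Finset ((Fin (n + 1) → ∀ j, Y j) × (Fin (n + 1) → ∀ j, U j)) :=
  Finset.univ.filter (fun p =>
    (∀ (s : Fin (n + 1)) (j : Fin K), ¬(j ≠ k ∧ s.1 ≤ t ∧ t < s.1 + T) →
        p.1 s j = Classical.arbitrary (Y j)) ∧
    (∀ (s : Fin (n + 1)) (j : Fin K), ¬(j ≠ k ∧ s.1 < t ∧ t < s.1 + T) →
        p.2 s j = Classical.arbitrary (U j)))

/-- Canonical (finite) set of realizations of `Λ_t^{(K)}` (all stations). -/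
noncomputable def privAllSet (n T t : ℕ) :
    Finset ((Fin (n + 1) → ∀ j, Y j) × (Fin (n + 1) → ∀ j, U j)) :=
  Finset.univ.filter (fun p =>
    (∀ (s : Fin (n + 1)) (j : Fin K), ¬(s.1 ≤ t ∧ t < s.1 + T) →
        p.1 s j = Classical.arbitrary (Y j)) ∧
    (∀ (s : Fin (n + 1)) (j : Fin K), ¬(s.1 < t ∧ t < s.1 + T) →
        p.2 s j = Classical.arbitrary (U j)))

/-- View the observation part of a private realization as a (ℕ-indexed) realization
function. -/
def pWinY {n : ℕ} (p : (Fin (n + 1) → ∀ j, Y j) × (Fin (n + 1) → ∀ j, U j)) :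
    ℕ → ∀ j, Y j := fun s => p.1 (idx n s)

/-- View the action part of a private realization as a realization function. -/
def pWinU {n : ℕ} (p : (Fin (n + 1) → ∀ j, Y j) × (Fin (n + 1) → ∀ j, U j)) :
    ℕ → ∀ j, U j := fun s => p.2 (idx n s)

/-- The observation history obtained by combining the realized information `iy` of
station `k` (own and common coordinates) with the private window `py` of the other
stations. -/
def mixObs {n : ℕ} (T t : ℕ) (k : Fin K) (iy : ℕ → ∀ j, Y j)
    (py : Fin (n + 1) → ∀ j, Y j) : ℕ → ∀ j, Y j :=
  fun s j => if j = k ∨ s + T ≤ t then iy s j else py (idx n s) j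

/-- The action history obtained by combining the realized information `iu` of station `k`
with the private window `pu` of the other stations. -/
def mixAct {n : ℕ} (T t : ℕ) (k : Fin K) (iu : ℕ → ∀ j, U j)
    (pu : Fin (n + 1) → ∀ j, U j) : ℕ → ∀ j, U j :=
  fun s j => if j = k ∨ s + T ≤ t then iu s j else pu (idx n s) j

/-- The action profile at time `t`: station `k` applies `u`, while each other station `j`
applies `γ_t^j(δ_t^{(K)}, λ_t^j)`, its strategy evaluated at the common data recorded in
`(iy, iu)` and its private data recorded in the window `p`. -/
noncomputable def prof {n : ℕ} (T t : ℕ) (γ : Strat Y U) (k : Fin K)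
    (iy : ℕ → ∀ j, Y j) (iu : ℕ → ∀ j, U j)
    (p : (Fin (n + 1) → ∀ j, Y j) × (Fin (n + 1) → ∀ j, U j)) (u : U k) : ∀ j, U j :=
  Function.update (fun j => γ j t (mixObs T t k iy p.1) (mixAct T t k iu p.2)) k u

/-- The observation history of all stations obtained from the common data `δy` and the
private windows `py` of all stations. -/
def mixObsAll {n : ℕ} (T t : ℕ) (δy : ℕ → ∀ j, Y j)
    (py : Fin (n + 1) → ∀ j, Y j) : ℕ → ∀ j, Y j :=
  fun s j => if s + T ≤ t then δy s j else py (idx n s) j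

/-- The action history of all stations obtained from the common data `δu` and the private
windows `pu` of all stations. -/
def mixActAll {n : ℕ} (T t : ℕ) (δu : ℕ → ∀ j, U j)
    (pu : Fin (n + 1) → ∀ j, U j) : ℕ → ∀ j, U j :=
  fun s j => if s + T ≤ t then δu s j else pu (idx n s) j

/-- The action profile `u_t^{(K)} = {γ_t^j(δ_t^{(K)}, λ_t^j)}_{j=1}^K`. -/
noncomputable def profAll {n : ℕ} (T t : ℕ) (γ : Strat Y U)
    (δy : ℕ → ∀ j, Y j) (δu : ℕ → ∀ j, U j)
    (p : (Fin (n + 1) → ∀ j, Y j) × (Fin (n + 1) → ∀ j, U j)) : ∀ j, U j :=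
  fun j => γ j t (mixObsAll T t δy p.1) (mixActAll T t δu p.2)

/-- The realization of `I_{t+1}^k` obtained from `i_t^k = (iy, iu)`, the new own
observation `y'` at time `t+1` and the private window `p` of the other stations. -/
noncomputable def newObs {n : ℕ} (T t : ℕ) (k : Fin K) (iy : ℕ → ∀ j, Y j)
    (p : (Fin (n + 1) → ∀ j, Y j) × (Fin (n + 1) → ∀ j, U j)) (y' : Y k) : ℕ → ∀ j, Y j :=
  fun s => if s = t + 1 then Function.update (fun j => iy s j) k y' else mixObs T t k iy p.1 s

/-- The action part of the realization of `I_{t+1}^k`: at time `t` station `k` applies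
`u` and the others apply their strategies. -/
noncomputable def newAct {n : ℕ} (T t : ℕ) (γ : Strat Y U) (k : Fin K)
    (iy : ℕ → ∀ j, Y j) (iu : ℕ → ∀ j, U j)
    (p : (Fin (n + 1) → ∀ j, Y j) × (Fin (n + 1) → ∀ j, U j)) (u : U k) : ℕ → ∀ j, U j :=
  fun s => if s = t then prof T t γ k iy iu p u else mixAct T t k iu p.2 s

/-! ### Dynamic programming equations (Theorem 3 (1.1)) -/

/-- The expected stage cost at time `t` under the private posterior `Ξ_t^k[i_t^k]` when
station `k` applies `u` and the other stations apply their strategies: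
`Σ_{x_t, λ_t^{-k}} ℓ(t, x_t, u_t^k, γ_t^{-k}(δ_t^{(K)}, λ_t^{-k})) Ξ_t^k[i_t^k](x_t, λ_t^{-k})`. -/
noncomputable def dpStage (n T : ℕ) (M : Kernels X Y U) (γ : Strat Y U) (k : Fin K)
    (t : ℕ) (iy : ℕ → ∀ j, Y j) (iu : ℕ → ∀ j, U j) (u : U k) : ℝ :=
  ∑ x : X, ∑ p ∈ privSet n T k t,
    M.cost t x (prof T t γ k iy iu p u) * Xi n T M γ k t iy iu x (pWinY p) (pWinU p)

/-- The expected continuation value: the function `V` at time `t+1`, evaluated at the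
updated realization `(i_t^k, y_{t+1}^k, u_t^k, y_{t-T+1}^{-k}, u_{t-T+1}^{-k})`, averaged
with the kernel
`q_{t+1}^k(dy_{t+1}^k | x_{t+1}, u) s_{t+1}(dx_{t+1} | x_t, u) Ξ_t^k[i_t^k](dx_t, dλ_t^{-k})`. -/
noncomputable def dpCont (n T : ℕ) (M : Kernels X Y U) (γ : Strat Y U) (k : Fin K)
    (t : ℕ) (iy : ℕ → ∀ j, Y j) (iu : ℕ → ∀ j, U j)
    (V : ℕ → (ℕ → ∀ j, Y j) → (ℕ → ∀ j, U j) → ℝ) (u : U k) : ℝ :=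
  ∑ y' : Y k, ∑ x : X, ∑ x' : X, ∑ p ∈ privSet n T k t,
    V (t + 1) (newObs T t k iy p y') (newAct T t γ k iy iu p u) *
      M.obs t k x' (prof T t γ k iy iu p u) y' *
      M.trans t x (prof T t γ k iy iu p u) x' *
      Xi n T M γ k t iy iu x (pWinY p) (pWinU p)

/-- `V` satisfies the dynamic programming equations of Theorem 3 (1.1) for station `k`
(with the other stations' strategies fixed to those of `γ`): at the terminal time the
minimum over the action space of the expected stage cost, and before that the minimum
over the action space of expected stage cost plus expected continuation value, on every
realization of `I_t^k` of positive probability. -/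
noncomputable def SatisfiesDP (n T : ℕ) (M : Kernels X Y U) (γ : Strat Y U) (k : Fin K)
    (V : ℕ → (ℕ → ∀ j, Y j) → (ℕ → ∀ j, U j) → ℝ) : Prop :=
  (∀ iy iu, PosInfo n T M γ k n iy iu →
      V n iy iu = ⨅ u : U k, dpStage n T M γ k n iy iu u) ∧
  (∀ t iy iu, t < n → PosInfo n T M γ k t iy iu →
      V t iy iu = ⨅ u : U k, (dpStage n T M γ k t iy iu u + dpCont n T M γ k t iy iu V u))

/-- Station `k`'s strategy in `γ` attains, at every realization of positive probability,
the minimum in the dynamic programming equations with value function `V`. -/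
noncomputable def AttainsDP (n T : ℕ) (M : Kernels X Y U) (γ : Strat Y U) (k : Fin K)
    (V : ℕ → (ℕ → ∀ j, Y j) → (ℕ → ∀ j, U j) → ℝ) : Prop :=
  (∀ iy iu, PosInfo n T M γ k n iy iu →
      V n iy iu = dpStage n T M γ k n iy iu (γ k n iy iu)) ∧
  (∀ t iy iu, t < n → PosInfo n T M γ k t iy iu →
      V t iy iu = dpStage n T M γ k t iy iu (γ k t iy iu) +
        dpCont n T M γ k t iy iu V (γ k t iy iu))

/-- The value process `𝒱_t^{γ^{k,o}, γ^{-k,o}}(i_t^k)`: the infimum, over admissible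
strategies of station `k` used from time `t` on (station `k` using `γo`'s strategy before
`t` and the other stations using `γo` throughout), of the conditional cost-to-go given
`I_t^k = i_t^k`. -/
noncomputable def Vval (n T : ℕ) (M : Kernels X Y U) (γo : Strat Y U) (k : Fin K) (t : ℕ)
    (iy : ℕ → ∀ j, Y j) (iu : ℕ → ∀ j, U j) : ℝ :=
  sInf { r : ℝ | ∃ g : SStrat Y U k,
    Admissible T (updStrat γo k (splice (γo k) g t)) ∧
    r = Jcond n M (updStrat γo k (splice (γo k) g t)) t
          (InfoEq T (updStrat γo k (splice (γo k) g t)) k t iy iu) }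

/-! ### Structured strategy classes -/

/-- Semi-separated strategies: for every station `k` and time `t`, the action depends on
the information `i_t^k` only through `(Ξ_t^k[i_t^k], δ_t^{(K)}, λ_t^k)`. -/
noncomputable def SemiSeparated (n T : ℕ) (M : Kernels X Y U) (γ : Strat Y U) : Prop :=
  ∀ (k : Fin K) (t : ℕ) (y y' : ℕ → ∀ j, Y j) (u u' : ℕ → ∀ j, U j),
    (∀ x ly lu, Xi n T M γ k t y u x ly lu = Xi n T M γ k t y' u' x ly lu) →
    (∀ s j, s + T ≤ t → y s j = y' s j) →
    (∀ s j, s + T ≤ t → u s j = u' s j) →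
    (∀ s, s ≤ t → t < s + T → y s k = y' s k) →
    (∀ s, s < t → t < s + T → u s k = u' s k) →
    γ k t y u = γ k t y' u'

/-- Separated strategies (with the centralized posterior `Π`): the action depends on
`i_t^k` only through `(Ξ_t^k[i_t^k], Π_t^{(K)}[δ_t^{(K)}], λ_t^k)`. -/
noncomputable def SeparatedPi (n T : ℕ) (M : Kernels X Y U) (γ : Strat Y U) : Prop :=
  ∀ (k : Fin K) (t : ℕ) (y y' : ℕ → ∀ j, Y j) (u u' : ℕ → ∀ j, U j),
    (∀ x ly lu, Xi n T M γ k t y u x ly lu = Xi n T M γ k t y' u' x ly lu) →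
    (∀ x, PiPost n T M γ t y u x = PiPost n T M γ t y' u' x) →
    (∀ s, s ≤ t → t < s + T → y s k = y' s k) →
    (∀ s, s < t → t < s + T → u s k = u' s k) →
    γ k t y u = γ k t y' u'

/-- Separated strategies (with the centralized posterior `Θ`): the action depends on
`i_t^k` only through `(Ξ_t^k[i_t^k], Θ_t^{γ}[δ_t^{(K)}], λ_t^k)`. -/
noncomputable def SeparatedTheta (n T : ℕ) (M : Kernels X Y U) (γ : Strat Y U) : Prop :=
  ∀ (k : Fin K) (t : ℕ) (y y' : ℕ → ∀ j, Y j) (u u' : ℕ → ∀ j, U j),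
    (∀ x ly lu, Xi n T M γ k t y u x ly lu = Xi n T M γ k t y' u' x ly lu) →
    (∀ x ly lu, ThetaPost n T M γ t y u x ly lu = ThetaPost n T M γ t y' u' x ly lu) →
    (∀ s, s ≤ t → t < s + T → y s k = y' s k) →
    (∀ s, s < t → t < s + T → u s k = u' s k) →
    γ k t y u = γ k t y' u'

/-- Information-state strategies: the action depends on `i_t^k` only through the pair
`(Ξ_t^k[i_t^k], Θ_t^{γ}[δ_t^{(K)}])`. -/
noncomputable def InfoStateTheta (n T : ℕ) (M : Kernels X Y U) (γ : Strat Y U) : Prop :=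
  ∀ (k : Fin K) (t : ℕ) (y y' : ℕ → ∀ j, Y j) (u u' : ℕ → ∀ j, U j),
    (∀ x ly lu, Xi n T M γ k t y u x ly lu = Xi n T M γ k t y' u' x ly lu) →
    (∀ x ly lu, ThetaPost n T M γ t y u x ly lu = ThetaPost n T M γ t y' u' x ly lu) →
    γ k t y u = γ k t y' u'

end DelayedSharing

namespace DelayedSharing

/-!
On the event `I_t^k = i_t^k` the action of station `k` is a constant `u`, and the actions of the
other stations at time `t` are functions of the common data and of `Λ_t^{-k}`. Hence, given
`I_t^k = i_t^k`, the joint law of `(Λ_t^{-k}, X_{t+1}, Y_{t+1})` is obtained from `Ξ_t^k[i_t^k]` by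
the one-step kernel, which involves neither `γ^k` nor station `k`'s own private data. Bayes' rule
expresses `Ξ_{t+1}^k[I_{t+1}^k]` through this joint law, as a function of the same variables, so
its conditional law is determined by the same data.
-/

/-- Exchanging the coordinate with the value overwriting it is an involution of `Ω × Z`. -/
theorem sum_sum_overwrite {Ω Z R : Type*} [Fintype Ω] [Fintype Z] [AddCommMonoid R]
    (get : Ω → Z) (put : Ω → Z → Ω) (get_put : ∀ ω z, get (put ω z) = z)
    (put_put_get : ∀ ω z, put (put ω z) (get ω) = ω) (f : Ω → R) :
    ∑ ω, ∑ z, f (put ω z) = Fintype.card Z • ∑ ω, f ω := by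
  let swap : Ω × Z → Ω × Z := fun p => (put p.1 p.2, get p.1)
  have hswap : Function.Involutive swap := fun p => by
    simp only [swap, get_put, put_put_get]
  calc ∑ ω, ∑ z, f (put ω z)
      = ∑ p : Ω × Z, f (swap p).1 := (Fintype.sum_prod_type fun p => f (swap p).1).symm
    _ = ∑ p : Ω × Z, f p.1 := Equiv.sum_comp hswap.toPerm fun p : Ω × Z => f p.1
    _ = Fintype.card Z • ∑ ω, f ω := by
      simp only [Fintype.sum_prod_type, Finset.sum_const, Finset.card_univ, Finset.sum_nsmul]

variable {X : Type} {K : ℕ} {Y U : Fin K → Type} {n T t m : ℕ} {k : Fin K}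

/-! ### Trajectories and their past -/

theorem val_idx (h : t ≤ n) : (idx n t : ℕ) = t := min_eq_left h

theorem idx_ne_idx {s : ℕ} (hst : s < t) (ht : t ≤ n) : idx n s ≠ idx n t := fun h =>
  hst.ne (by simpa only [val_idx (hst.le.trans ht), val_idx ht] using congrArg Fin.val h)

/-- The pair `(X_t, Y_t^{(K)})` along a trajectory. -/
def stateObsAt (ω : Traj n X Y) (t : ℕ) : X × ∀ j, Y j := (ω.1 (idx n t), ω.2 (idx n t))

/-- The trajectory obtained from `ω` by overwriting `(X_t, Y_t^{(K)})` with `z`. -/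
def setAt (ω : Traj n X Y) (t : ℕ) (z : X × ∀ j, Y j) : Traj n X Y :=
  (Function.update ω.1 (idx n t) z.1, Function.update ω.2 (idx n t) z.2)

theorem stateObsAt_setAt (ω : Traj n X Y) (t : ℕ) (z : X × ∀ j, Y j) :
    stateObsAt (setAt ω t z) t = z :=
  Prod.ext (Function.update_self ..) (Function.update_self ..)

theorem setAt_setAt_stateObsAt (ω : Traj n X Y) (t : ℕ) (z : X × ∀ j, Y j) :
    setAt (setAt ω t z) t (stateObsAt ω t) = ω :=
  Prod.ext ((Function.update_idem ..).trans (Function.update_eq_self ..))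
    ((Function.update_idem ..).trans (Function.update_eq_self ..))

/-- Two trajectories have the same states and observations up to time `m`. -/
def AgreeUpto (m : ℕ) (ω ω' : Traj n X Y) : Prop :=
  ∀ s ≤ m, stateObsAt ω s = stateObsAt ω' s

theorem AgreeUpto.stateAt_eq {ω ω' : Traj n X Y} (h : AgreeUpto m ω ω') {s : ℕ} (hs : s ≤ m) :
    stateAt ω s = stateAt ω' s := congrArg Prod.fst (h s hs)

theorem AgreeUpto.obsAt_eq {ω ω' : Traj n X Y} (h : AgreeUpto m ω ω') {s : ℕ} (hs : s ≤ m) :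
    obsAt ω s = obsAt ω' s := congrArg Prod.snd (h s hs)

theorem agreeUpto_setAt_succ (hm : m < n) (ω : Traj n X Y) (z : X × ∀ j, Y j) :
    AgreeUpto m (setAt ω (m + 1) z) ω := fun s hs =>
  have hne : idx n s ≠ idx n (m + 1) := idx_ne_idx (Nat.lt_succ_of_le hs) hm
  Prod.ext (Function.update_of_ne hne ..) (Function.update_of_ne hne ..)

/-- `F` is a function of the states and observations up to time `m`: the finite counterpart of
measurability with respect to the past of time `m`. -/
def DependsOnPast {α : Sort*} (m : ℕ) (F : Traj n X Y → α) : Prop :=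
  ∀ ⦃ω ω'⦄, AgreeUpto m ω ω' → F ω = F ω'

theorem DependsOnPast.mono {α : Sort*} {F : Traj n X Y → α} {m' : ℕ} (hF : DependsOnPast m F)
    (h : m ≤ m') : DependsOnPast m' F :=
  fun _ _ hω => hF fun s hs => hω s (hs.trans h)

/-! ### Information patterns as relations between histories -/

/-- Two observation–action histories have the same common data `Δ_t^{(K)}`. -/
def SameCommon (T t : ℕ) (y : ℕ → ∀ j, Y j) (u : ℕ → ∀ j, U j) (y' : ℕ → ∀ j, Y j)
    (u' : ℕ → ∀ j, U j) : Prop :=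
  (∀ s j, s + T ≤ t → y s j = y' s j) ∧ (∀ s j, s + T ≤ t → u s j = u' s j)

theorem SameCommon.refl (y : ℕ → ∀ j, Y j) (u : ℕ → ∀ j, U j) : SameCommon T t y u y u :=
  ⟨fun _ _ _ => rfl, fun _ _ _ => rfl⟩

/-- Two observation–action histories realize the same information pattern `I_t^k`. -/
def SameInfo (T : ℕ) (k : Fin K) (t : ℕ) (y : ℕ → ∀ j, Y j) (u : ℕ → ∀ j, U j)
    (y' : ℕ → ∀ j, Y j) (u' : ℕ → ∀ j, U j) : Prop :=
  (∀ s j, s + T ≤ t → y s j = y' s j) ∧ (∀ s j, s + T ≤ t → u s j = u' s j) ∧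
    (∀ s, s ≤ t → y s k = y' s k) ∧ (∀ s, s < t → u s k = u' s k)

/-- Two observation–action histories have the same private data `Λ_t^{-k}` of the stations other
than `k`. -/
def SamePrivOthers (T : ℕ) (k : Fin K) (t : ℕ) (y : ℕ → ∀ j, Y j) (u : ℕ → ∀ j, U j)
    (y' : ℕ → ∀ j, Y j) (u' : ℕ → ∀ j, U j) : Prop :=
  (∀ s j, j ≠ k → s ≤ t → t < s + T → y s j = y' s j) ∧
    (∀ s j, j ≠ k → s < t → t < s + T → u s j = u' s j)

theorem SameInfo.of_succ {y y' : ℕ → ∀ j, Y j} {u u' : ℕ → ∀ j, U j}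
    (h : SameInfo T k (t + 1) y u y' u') : SameInfo T k t y u y' u' :=
  ⟨fun s j hs => h.1 s j (by lia), fun s j hs => h.2.1 s j (by lia),
    fun s hs => h.2.2.1 s (by lia), fun s hs => h.2.2.2 s (by lia)⟩

theorem SameInfo.trans {y y' y'' : ℕ → ∀ j, Y j} {u u' u'' : ℕ → ∀ j, U j}
    (h : SameInfo T k t y u y' u') (h' : SameInfo T k t y' u' y'' u'') :
    SameInfo T k t y u y'' u'' :=
  ⟨fun s j hs => (h.1 s j hs).trans (h'.1 s j hs),
    fun s j hs => (h.2.1 s j hs).trans (h'.2.1 s j hs),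
    fun s hs => (h.2.2.1 s hs).trans (h'.2.2.1 s hs),
    fun s hs => (h.2.2.2 s hs).trans (h'.2.2.2 s hs)⟩

section Actions

variable [∀ k, Nonempty (U k)] {γ : Strat Y U}

theorem actUpto_of_lt (γ : Strat Y U) (y : ℕ → ∀ j, Y j) {s : ℕ} (h : s < t) :
    actUpto γ y t s = act γ y s := by
  induction t with
  | zero => exact absurd h s.not_lt_zero
  | succ t ih =>
    by_cases hs : s = t
    · subst hs
      exact if_pos rfl
    · exact (if_neg hs).trans (ih (by lia))

theorem actAt_eq_of_sameInfo (hT : 1 ≤ T) (hγ : Admissible T γ) {j : Fin K} {ω : Traj n X Y}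
    {y : ℕ → ∀ j, Y j} {u : ℕ → ∀ j, U j}
    (h : SameInfo T j t (obsAt ω) (actAt γ ω) y u) : actAt γ ω t j = γ j t y u := by
  obtain ⟨hy, hu, hyj, huj⟩ := h
  refine hγ j t _ _ _ _ hy (fun s i hs => ?_) hyj (fun s hs => ?_)
  · rw [actUpto_of_lt _ _ (by lia)]
    exact hu s i hs
  · rw [actUpto_of_lt _ _ hs]
    exact huj s hs

theorem dependsOnPast_actAt (hT : 1 ≤ T) (hγ : Admissible T γ) (t : ℕ) :
    DependsOnPast t fun ω : Traj n X Y => actAt γ ω t := by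
  induction t using Nat.strong_induction_on with
  | _ t ih =>
    intro ω ω' h
    have hact : ∀ s < t, actAt γ ω s = actAt γ ω' s := fun s hs => (ih s hs).mono hs.le h
    funext j
    refine actAt_eq_of_sameInfo (y := obsAt ω') (u := actUpto γ (obsAt ω') t) hT hγ
      ⟨fun s i hs => ?_, fun s i hs => ?_, fun s hs => ?_, fun s hs => ?_⟩
    · rw [h.obsAt_eq (by lia)]
    · rw [actUpto_of_lt _ _ (by lia), hact s (by lia)]
      rfl
    · rw [h.obsAt_eq hs]
    · rw [actUpto_of_lt _ _ hs, hact s hs]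
      rfl

theorem dependsOnPast_infoEq (hT : 1 ≤ T) (hγ : Admissible T γ) (k : Fin K)
    (iy : ℕ → ∀ j, Y j) (iu : ℕ → ∀ j, U j) :
    DependsOnPast t fun ω : Traj n X Y => InfoEq T γ k t iy iu ω := by
  have transfer : ∀ ω ω' : Traj n X Y, AgreeUpto t ω ω' →
      InfoEq T γ k t iy iu ω → InfoEq T γ k t iy iu ω' := by
    intro ω ω' h hω
    have hobs : ∀ s ≤ t, obsAt ω' s = obsAt ω s := fun s hs => (h.obsAt_eq hs).symm
    have hact : ∀ s ≤ t, actAt γ ω' s = actAt γ ω s := fun s hs =>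
      ((dependsOnPast_actAt hT hγ s).mono hs h).symm
    exact SameInfo.trans
      ⟨fun s j hs => by rw [hobs s (by lia)], fun s j hs => by rw [hact s (by lia)],
        fun s hs => by rw [hobs s hs], fun s hs => by rw [hact s hs.le]⟩ hω
  exact fun ω ω' h => propext ⟨transfer ω ω' h, transfer ω' ω fun s hs => (h s hs).symm⟩

end Actions

/-! ### The one-step kernel -/

/-- The joint transition probability of `(X_{t+1}, Y_{t+1}^{(K)})` from the state `x` under the
action profile `a`. -/
noncomputable def Kernels.step (M : Kernels X Y U) (t : ℕ) (x : X) (a : ∀ j, U j)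
    (z : X × ∀ j, Y j) : ℝ :=
  M.trans t x a z.1 * ∏ j, M.obs t j z.1 a (z.2 j)

theorem Kernels.IsPMF.sum_step [Fintype X] [∀ k, Fintype (Y k)] {M : Kernels X Y U}
    (hM : M.IsPMF) (t : ℕ) (x : X) (a : ∀ j, U j) : ∑ z, M.step t x a z = 1 := by
  obtain ⟨-, -, -, htrans, hobs⟩ := hM
  have hprod (x' : X) : ∑ y : ∀ j, Y j, ∏ j, M.obs t j x' a (y j) = 1 := by
    rw [← Fintype.prod_sum]
    exact Finset.prod_eq_one fun j _ => (hobs t j x' a).2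
  simp only [Kernels.step, Fintype.sum_prod_type, ← Finset.mul_sum, hprod, mul_one,
    (htrans t x a).2]

section Markov

variable [∀ k, Nonempty (U k)] {γ : Strat Y U} {M : Kernels X Y U}

/-- The weight of the states and observations up to time `m`: the partial product of the kernels
defining `prob`. -/
noncomputable def prefixWeight (M : Kernels X Y U) (γ : Strat Y U) (m : ℕ) (ω : Traj n X Y) : ℝ :=
  M.prior (stateAt ω 0) * (∏ j, M.obs0 j (stateAt ω 0) (obsAt ω 0 j)) *
    ∏ s ∈ Finset.range m, M.step s (stateAt ω s) (actAt γ ω s) (stateObsAt ω (s + 1))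

theorem prefixWeight_succ (M : Kernels X Y U) (γ : Strat Y U) (m : ℕ) (ω : Traj n X Y) :
    prefixWeight M γ (m + 1) ω =
      M.step m (stateAt ω m) (actAt γ ω m) (stateObsAt ω (m + 1)) * prefixWeight M γ m ω := by
  rw [prefixWeight, Finset.prod_range_succ, prefixWeight]
  ring

theorem dependsOnPast_prefixWeight (hT : 1 ≤ T) (hγ : Admissible T γ) (M : Kernels X Y U) (m : ℕ) :
    DependsOnPast m fun ω : Traj n X Y => prefixWeight M γ m ω := by
  intro ω ω' h
  have hfactor : ∀ s ∈ Finset.range m,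
      M.step s (stateAt ω s) (actAt γ ω s) (stateObsAt ω (s + 1)) =
        M.step s (stateAt ω' s) (actAt γ ω' s) (stateObsAt ω' (s + 1)) := by
    intro s hs
    have hs : s < m := Finset.mem_range.1 hs
    have hact : actAt γ ω s = actAt γ ω' s := (dependsOnPast_actAt hT hγ s).mono hs.le h
    rw [h.stateAt_eq hs.le, hact, h (s + 1) hs]
  simp only [prefixWeight, h.stateAt_eq m.zero_le, h.obsAt_eq m.zero_le,
    Finset.prod_congr rfl hfactor]

variable [Fintype X] [∀ k, Fintype (Y k)]

/-- The cardinality appears because the coordinate `(X_{m+1}, Y_{m+1}^{(K)})` of `ω`, which is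
integrated out on the right, is still summed over there. -/
theorem card_mul_sum_prefixWeight_succ (hT : 1 ≤ T) (hγ : Admissible T γ) (M : Kernels X Y U)
    (hm : m < n) {G : Traj n X Y → (X × ∀ j, Y j) → ℝ}
    (hG : ∀ z, DependsOnPast m fun ω => G ω z) :
    Fintype.card (X × ∀ j, Y j) *
        ∑ ω, G ω (stateObsAt ω (m + 1)) * prefixWeight M γ (m + 1) ω =
      ∑ ω, (∑ z, G ω z * M.step m (stateAt ω m) (actAt γ ω m) z) * prefixWeight M γ m ω := by
  rw [← nsmul_eq_mul, ← sum_sum_overwrite (fun ω : Traj n X Y => stateObsAt ω (m + 1))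
    (fun ω => setAt ω (m + 1)) (fun ω => stateObsAt_setAt ω (m + 1))
    (fun ω => setAt_setAt_stateObsAt ω (m + 1))]
  refine Finset.sum_congr rfl fun ω _ => ?_
  rw [Finset.sum_mul]
  refine Finset.sum_congr rfl fun z _ => ?_
  have h : AgreeUpto m (setAt ω (m + 1) z) ω := agreeUpto_setAt_succ hm ω z
  have hact : actAt γ (setAt ω (m + 1) z) m = actAt γ ω m := dependsOnPast_actAt hT hγ m h
  have hweight : prefixWeight M γ m (setAt ω (m + 1) z) = prefixWeight M γ m ω :=
    dependsOnPast_prefixWeight hT hγ M m h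
  have hGz : G (setAt ω (m + 1) z) z = G ω z := hG z h
  rw [stateObsAt_setAt, prefixWeight_succ, stateObsAt_setAt, h.stateAt_eq le_rfl, hact, hweight,
    hGz, mul_assoc]

theorem card_pow_mul_sum_prefixWeight (hT : 1 ≤ T) (hγ : Admissible T γ) (hM : M.IsPMF) {m' : ℕ}
    (hmm' : m ≤ m') (hm' : m' ≤ n) {f : Traj n X Y → ℝ} (hf : DependsOnPast m f) :
    (Fintype.card (X × ∀ j, Y j) : ℝ) ^ m' * ∑ ω, f ω * prefixWeight M γ m' ω =
      (Fintype.card (X × ∀ j, Y j) : ℝ) ^ m * ∑ ω, f ω * prefixWeight M γ m ω := by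
  induction m', hmm' using Nat.le_induction with
  | base => rfl
  | succ m' hmm' ih =>
    rw [pow_succ, mul_assoc,
      card_mul_sum_prefixWeight_succ (G := fun ω' _ => f ω') hT hγ M hm' fun _ => hf.mono hmm']
    simp only [← Finset.mul_sum, hM.sum_step, mul_one]
    exact ih (by lia)

theorem Pr_eq_sum (A : Traj n X Y → Prop) [DecidablePred A] :
    Pr n M γ A = ∑ ω, if A ω then prob n M γ ω else 0 := by
  unfold Pr
  congr!

theorem card_pow_mul_Pr (hT : 1 ≤ T) (hγ : Admissible T γ) (hM : M.IsPMF) (hm : m ≤ n)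
    {A : Traj n X Y → Prop} [DecidablePred A] (hA : DependsOnPast m A) :
    (Fintype.card (X × ∀ j, Y j) : ℝ) ^ n * Pr n M γ A =
      (Fintype.card (X × ∀ j, Y j) : ℝ) ^ m *
        ∑ ω, (if A ω then 1 else 0) * prefixWeight M γ m ω := by
  rw [← card_pow_mul_sum_prefixWeight hT hγ hM hm le_rfl fun ω ω' h => by simp only [hA h]]
  simp only [Pr_eq_sum, boole_mul]
  rfl

theorem Pr_and_stateObsAt_succ (hT : 1 ≤ T) (hγ : Admissible T γ) (hM : M.IsPMF) (ht : t < n)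
    {A : Traj n X Y → Prop} (hA : DependsOnPast t A) {x : X} {a : ∀ j, U j}
    (hstate : ∀ ω, A ω → stateAt ω t = x) (hact : ∀ ω, A ω → actAt γ ω t = a)
    (z : X × ∀ j, Y j) :
    Pr n M γ (fun ω => A ω ∧ stateObsAt ω (t + 1) = z) = M.step t x a z * Pr n M γ A := by
  have hAz : DependsOnPast (t + 1) fun ω => A ω ∧ stateObsAt ω (t + 1) = z := fun ω ω' h => by
    simp only [hA.mono t.le_succ h, h (t + 1) le_rfl]
  have hcard : (Fintype.card (X × ∀ j, Y j) : ℝ) ≠ 0 :=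
    Nat.cast_ne_zero.2 (Fintype.card_pos_iff.2 ⟨z⟩).ne'
  let G (ω : Traj n X Y) (z' : X × ∀ j, Y j) : ℝ := if z' = z then if A ω then 1 else 0 else 0
  have hG : ∀ z', DependsOnPast t fun ω => G ω z' := fun z' ω ω' h => by simp only [G, hA h]
  have hAz_eq (ω : Traj n X Y) :
      (if A ω ∧ stateObsAt ω (t + 1) = z then (1 : ℝ) else 0) = G ω (stateObsAt ω (t + 1)) := by
    simp only [G, and_comm (a := A ω), ite_and]
  have hG_step (ω : Traj n X Y) :
      ∑ z', G ω z' * M.step t (stateAt ω t) (actAt γ ω t) z' =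
        M.step t x a z * if A ω then 1 else 0 := by
    by_cases hω : A ω
    · simp only [G, hω, hstate ω hω, hact ω hω, if_true, boole_mul, Finset.sum_ite_eq',
        Finset.mem_univ, mul_one]
    · simp only [G, hω, if_false, ite_self, zero_mul, Finset.sum_const_zero, mul_zero]
  rw [← mul_right_inj' (pow_ne_zero n hcard), mul_left_comm, card_pow_mul_Pr hT hγ hM ht hAz,
    card_pow_mul_Pr hT hγ hM ht.le hA, mul_left_comm (M.step t x a z), pow_succ, mul_assoc]
  simp only [hAz_eq]
  rw [card_mul_sum_prefixWeight_succ hT hγ M ht hG]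
  simp only [hG_step, mul_assoc, ← Finset.mul_sum]

end Markov

/-! ### Conditional probabilities -/

section CondPr

variable [∀ k, Nonempty (U k)] [Fintype X] [∀ k, Fintype (Y k)]
  {M : Kernels X Y U} {γ : Strat Y U} {A A' B R : Traj n X Y → Prop}

theorem condPr_congr (h : ∀ ω, B ω → (A ω ↔ A' ω)) : condPr n M γ A B = condPr n M γ A' B := by
  have hAB : (fun ω => A ω ∧ B ω) = fun ω => A' ω ∧ B ω :=
    funext fun ω => propext (and_congr_left (h ω))
  rw [condPr, condPr, hAB]

theorem condPr_and_right (hB : Pr n M γ B ≠ 0) :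
    condPr n M γ A (fun ω => R ω ∧ B ω) =
      condPr n M γ (fun ω => A ω ∧ R ω) B / condPr n M γ R B := by
  simp only [condPr, and_assoc, div_div_div_cancel_right₀ hB]

theorem condPr_comp_eq_sum {S : Type*} {σ : Traj n X Y → S} {s : Finset S} (hs : ∀ ω, σ ω ∈ s)
    (P : S → Prop) :
    condPr n M γ (fun ω => P (σ ω)) B =
      ∑ w ∈ s, if P w then condPr n M γ (fun ω => σ ω = w) B else 0 := by
  have hPr : Pr n M γ (fun ω => P (σ ω) ∧ B ω) =
      ∑ w ∈ s, if P w then Pr n M γ (fun ω => σ ω = w ∧ B ω) else 0 := by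
    calc Pr n M γ (fun ω => P (σ ω) ∧ B ω)
        = ∑ ω, ∑ w ∈ s, if P w then if σ ω = w ∧ B ω then prob n M γ ω else 0 else 0 := by
          rw [Pr_eq_sum]
          refine Finset.sum_congr rfl fun ω _ => ?_
          rw [Finset.sum_eq_single_of_mem (σ ω) (hs ω) fun w _ hw => ?_]
          · simp only [true_and, ite_and]
          · simp only [hw.symm, false_and, if_false, ite_self]
      _ = ∑ w ∈ s, if P w then Pr n M γ (fun ω => σ ω = w ∧ B ω) else 0 := by
          rw [Finset.sum_comm]
          refine Finset.sum_congr rfl fun w _ => ?_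
          split_ifs
          · exact (Pr_eq_sum _).symm
          · exact Finset.sum_const_zero
  simp only [condPr, hPr, Finset.sum_div, ite_div, zero_div]

theorem condPr_comp_congr {S : Type*} {M₂ : Kernels X Y U} {γ₂ : Strat Y U}
    {B₂ : Traj n X Y → Prop} {σ σ₂ : Traj n X Y → S}
    (h : ∀ w, condPr n M γ (fun ω => σ ω = w) B = condPr n M₂ γ₂ (fun ω => σ₂ ω = w) B₂)
    (P : S → Prop) :
    condPr n M γ (fun ω => P (σ ω)) B = condPr n M₂ γ₂ (fun ω => P (σ₂ ω)) B₂ := by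
  let s : Finset S := Finset.univ.image σ ∪ Finset.univ.image σ₂
  rw [condPr_comp_eq_sum (s := s) fun ω =>
      Finset.mem_union_left _ (Finset.mem_image_of_mem σ (Finset.mem_univ ω)),
    condPr_comp_eq_sum (s := s) fun ω =>
      Finset.mem_union_right _ (Finset.mem_image_of_mem σ₂ (Finset.mem_univ ω))]
  simp only [h]

end CondPr

/-! ### The snapshot of the state and of the other stations' private data -/

/-- A realization of `(X_t, Λ_t^{-k})`, the private data being recorded by total histories. -/
@[ext]
structure Snapshot (X : Type) {K : ℕ} (Y U : Fin K → Type) where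
  state : X
  obs : ℕ → ∀ j, Y j
  act : ℕ → ∀ j, U j

/-- Outside the coordinates of `Λ_t^{-k}` the histories of `v` take the values `dy` and `du`. -/
def Snapshot.IsPadded (T : ℕ) (k : Fin K) (t : ℕ) (dy : ℕ → ∀ j, Y j) (du : ℕ → ∀ j, U j)
    (v : Snapshot X Y U) : Prop :=
  (∀ s j, ¬(j ≠ k ∧ s ≤ t ∧ t < s + T) → v.obs s j = dy s j) ∧
    (∀ s j, ¬(j ≠ k ∧ s < t ∧ t < s + T) → v.act s j = du s j)

/-- The action profile at time `t` when station `k` applies `u` and the other stations apply their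
strategies in `γ` to the histories of `v`. -/
def Snapshot.jointAction (γ : Strat Y U) (k : Fin K) (t : ℕ) (u : U k) (v : Snapshot X Y U) :
    ∀ j, U j :=
  Function.update (fun j => γ j t v.obs v.act) k u

theorem Snapshot.jointAction_congr {γ₁ γ₂ : Strat Y U} (hγ : ∀ j, j ≠ k → γ₁ j t = γ₂ j t)
    (u : U k) (v : Snapshot X Y U) : v.jointAction γ₁ k t u = v.jointAction γ₂ k t u := by
  funext j
  obtain rfl | hj := eq_or_ne j k
  · simp only [jointAction, Function.update_self]
  · simp only [jointAction, Function.update_of_ne hj, hγ j hj]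

/-- The snapshot extended by the action profile `a` of time `t` and the new pair
`z = (X_{t+1}, Y_{t+1}^{(K)})`. -/
def Snapshot.advance (v : Snapshot X Y U) (t : ℕ) (a : ∀ j, U j) (z : X × ∀ j, Y j) :
    Snapshot X Y U :=
  ⟨z.1, Function.update v.obs (t + 1) z.2, Function.update v.act t a⟩

section Snapshot

variable [∀ k, Nonempty (U k)] {γ : Strat Y U} {dy iy : ℕ → ∀ j, Y j}
  {du iu : ℕ → ∀ j, U j} {ω ω' : Traj n X Y} {u : U k} {s : ℕ} {j : Fin K}

/-- The realization of `(X_t, Λ_t^{-k})` along `ω`, padded by `dy` and `du`. -/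
noncomputable def snapshot (T : ℕ) (γ : Strat Y U) (k : Fin K) (t : ℕ) (dy : ℕ → ∀ j, Y j)
    (du : ℕ → ∀ j, U j) (ω : Traj n X Y) : Snapshot X Y U where
  state := stateAt ω t
  obs s j := if j ≠ k ∧ s ≤ t ∧ t < s + T then obsAt ω s j else dy s j
  act s j := if j ≠ k ∧ s < t ∧ t < s + T then actAt γ ω s j else du s j

theorem dependsOnPast_snapshot (hT : 1 ≤ T) (hγ : Admissible T γ) (k : Fin K) (t : ℕ)
    (dy : ℕ → ∀ j, Y j) (du : ℕ → ∀ j, U j) :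
    DependsOnPast t fun ω : Traj n X Y => snapshot T γ k t dy du ω := by
  intro ω ω' h
  refine Snapshot.ext (h.stateAt_eq le_rfl) ?_ ?_
  · funext s j
    refine ite_congr rfl (fun hs => ?_) fun _ => rfl
    rw [h.obsAt_eq hs.2.1]
  · funext s j
    refine ite_congr rfl (fun hs => ?_) fun _ => rfl
    exact congrFun ((dependsOnPast_actAt hT hγ s).mono hs.2.1.le h) j

theorem snapshot_eq_iff {v : Snapshot X Y U} :
    snapshot T γ k t dy du ω = v ↔
      v.IsPadded T k t dy du ∧
        (stateAt ω t = v.state ∧ PrivOthersEq T γ k t v.obs v.act ω) := by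
  constructor
  · rintro rfl
    exact ⟨⟨fun s j h => if_neg h, fun s j h => if_neg h⟩, rfl,
      fun s j hj hs hst => (if_pos ⟨hj, hs, hst⟩).symm,
      fun s j hj hs hst => (if_pos ⟨hj, hs, hst⟩).symm⟩
  · rintro ⟨⟨hdy, hdu⟩, hstate, hobs, hact⟩
    refine Snapshot.ext hstate ?_ ?_
    · funext s j
      exact ite_eq_iff'.2 ⟨fun h => hobs s j h.1 h.2.1 h.2.2, fun h => (hdy s j h).symm⟩
    · funext s j
      exact ite_eq_iff'.2 ⟨fun h => hact s j h.1 h.2.1 h.2.2, fun h => (hdu s j h).symm⟩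

/-- Station `j ≠ k` only sees the common data and its own private data, which the padded histories
record correctly. -/
theorem actAt_eq_jointAction (hT : 1 ≤ T) (hγ : Admissible T γ)
    (hd : SameCommon T t dy du iy iu) (hu : γ k t iy iu = u) (hω : InfoEq T γ k t iy iu ω) :
    actAt γ ω t = (snapshot T γ k t dy du ω).jointAction γ k t u := by
  funext j
  obtain rfl | hj := eq_or_ne j k
  · rw [Snapshot.jointAction, Function.update_self, ← hu]
    exact actAt_eq_of_sameInfo hT hγ hω
  rw [Snapshot.jointAction, Function.update_of_ne hj]
  have hy : ∀ s i, s + T ≤ t → obsAt ω s i = (snapshot T γ k t dy du ω).obs s i := fun s i hs =>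
    (((if_neg (by lia)).trans (hd.1 s i hs)).trans (hω.1 s i hs).symm).symm
  have hu' : ∀ s i, s + T ≤ t → actAt γ ω s i = (snapshot T γ k t dy du ω).act s i :=
    fun s i hs => (((if_neg (by lia)).trans (hd.2 s i hs)).trans (hω.2.1 s i hs).symm).symm
  refine actAt_eq_of_sameInfo hT hγ ⟨hy, hu', fun s hs => ?_, fun s hs => ?_⟩
  · obtain hcommon | hprivate := le_or_gt (s + T) t
    · exact hy s j hcommon
    · exact (if_pos ⟨hj, hs, hprivate⟩).symm
  · obtain hcommon | hprivate := le_or_gt (s + T) t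
    · exact hu' s j hcommon
    · exact (if_pos ⟨hj, hs, hprivate⟩).symm

/-- The padded realization of `(X_{t+1}, Y_{t+1}^{(K)}, Λ_t^{-k}, U_t^{(K)})`, station `k` applying
`u` at time `t`. -/
noncomputable def nextSnapshot (T : ℕ) (γ : Strat Y U) (k : Fin K) (t : ℕ) (dy : ℕ → ∀ j, Y j)
    (du : ℕ → ∀ j, U j) (u : U k) (ω : Traj n X Y) : Snapshot X Y U :=
  (snapshot T γ k t dy du ω).advance t ((snapshot T γ k t dy du ω).jointAction γ k t u)
    (stateObsAt ω (t + 1))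

theorem nextSnapshot_obs_of_private (hs : s ≤ t + 1) (hsj : s = t + 1 ∨ j ≠ k ∧ t < s + T) :
    (nextSnapshot T γ k t dy du u ω).obs s j = obsAt ω s j := by
  obtain rfl | hs := hs.eq_or_lt
  · exact congrFun (Function.update_self ..) j
  · exact (congrFun (Function.update_of_ne hs.ne ..) j).trans (if_pos (by lia))

theorem nextSnapshot_obs_of_not_private (hs : s ≠ t + 1) (hsj : j = k ∨ s + T ≤ t) :
    (nextSnapshot T γ k t dy du u ω).obs s j = dy s j :=
  (congrFun (Function.update_of_ne hs ..) j).trans (if_neg (by lia))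

theorem nextSnapshot_act_of_private (hT : 1 ≤ T) (hγ : Admissible T γ)
    (hd : SameCommon T t dy du iy iu) (hu : γ k t iy iu = u)
    (hω : InfoEq T γ k t iy iu ω) (hs : s ≤ t) (hsj : s = t ∨ j ≠ k ∧ t < s + T) :
    (nextSnapshot T γ k t dy du u ω).act s j = actAt γ ω s j := by
  obtain rfl | hs := hs.eq_or_lt
  · exact congrFun ((Function.update_self ..).trans
      (actAt_eq_jointAction hT hγ hd hu hω).symm) j
  · exact (congrFun (Function.update_of_ne hs.ne ..) j).trans (if_pos (by lia))

theorem nextSnapshot_act_of_not_private (hs : s ≠ t) (hsj : j = k ∨ s + T ≤ t) :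
    (nextSnapshot T γ k t dy du u ω).act s j = du s j :=
  (congrFun (Function.update_of_ne hs ..) j).trans (if_neg (by lia))

theorem nextSnapshot_obs_eq_iff (hω : InfoEq T γ k t iy iu ω) (hω' : InfoEq T γ k t iy iu ω')
    (hs : s ≤ t + 1) :
    (nextSnapshot T γ k t dy du u ω').obs s j = (nextSnapshot T γ k t dy du u ω).obs s j ↔
      obsAt ω' s j = obsAt ω s j := by
  by_cases hsj : s = t + 1 ∨ j ≠ k ∧ t < s + T
  · rw [nextSnapshot_obs_of_private hs hsj, nextSnapshot_obs_of_private hs hsj]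
  obtain ⟨hst, hknown⟩ : s ≠ t + 1 ∧ (j = k ∨ s + T ≤ t) := by lia
  have hobs : obsAt ω' s j = obsAt ω s j := by
    obtain rfl | hcommon := hknown
    · exact (hω'.2.2.1 s (by lia)).trans (hω.2.2.1 s (by lia)).symm
    · exact (hω'.1 s j hcommon).trans (hω.1 s j hcommon).symm
  simp only [nextSnapshot_obs_of_not_private hst hknown, hobs]

theorem nextSnapshot_act_eq_iff (hT : 1 ≤ T) (hγ : Admissible T γ)
    (hd : SameCommon T t dy du iy iu) (hu : γ k t iy iu = u)
    (hω : InfoEq T γ k t iy iu ω) (hω' : InfoEq T γ k t iy iu ω') (hs : s ≤ t) :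
    (nextSnapshot T γ k t dy du u ω').act s j = (nextSnapshot T γ k t dy du u ω).act s j ↔
      actAt γ ω' s j = actAt γ ω s j := by
  by_cases hsj : s = t ∨ j ≠ k ∧ t < s + T
  · rw [nextSnapshot_act_of_private hT hγ hd hu hω hs hsj,
      nextSnapshot_act_of_private hT hγ hd hu hω' hs hsj]
  obtain ⟨hst, hknown⟩ : s ≠ t ∧ (j = k ∨ s + T ≤ t) := by lia
  have hact : actAt γ ω' s j = actAt γ ω s j := by
    obtain rfl | hcommon := hknown
    · exact (hω'.2.2.2 s (by lia)).trans (hω.2.2.2 s (by lia)).symm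
    · exact (hω'.2.1 s j hcommon).trans (hω.2.1 s j hcommon).symm
  simp only [nextSnapshot_act_of_not_private hst hknown, hact]

theorem infoEq_succ_iff (hT : 1 ≤ T) (hγ : Admissible T γ)
    (hd : SameCommon T t dy du iy iu) (hu : γ k t iy iu = u)
    (hω : InfoEq T γ k t iy iu ω) :
    InfoEq T γ k (t + 1) (obsAt ω) (actAt γ ω) ω' ↔
      SameInfo T k (t + 1) (nextSnapshot T γ k t dy du u ω').obs
          (nextSnapshot T γ k t dy du u ω').act (nextSnapshot T γ k t dy du u ω).obs
          (nextSnapshot T γ k t dy du u ω).act ∧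
        InfoEq T γ k t iy iu ω' := by
  have hobs (hω' : InfoEq T γ k t iy iu ω') (s : ℕ) (j : Fin K) (hs : s ≤ t + 1) :=
    nextSnapshot_obs_eq_iff (dy := dy) (du := du) (u := u) (j := j) hω hω' hs
  have hact (hω' : InfoEq T γ k t iy iu ω') (s : ℕ) (j : Fin K) (hs : s ≤ t) :=
    nextSnapshot_act_eq_iff (j := j) hT hγ hd hu hω hω' hs
  constructor
  · intro h
    have hω' : InfoEq T γ k t iy iu ω' := (SameInfo.of_succ h).trans hω
    obtain ⟨hy, hu, hyk, huk⟩ := h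
    exact ⟨⟨fun s j hs => (hobs hω' s j (by lia)).2 (hy s j hs),
      fun s j hs => (hact hω' s j (by lia)).2 (hu s j hs),
      fun s hs => (hobs hω' s k hs).2 (hyk s hs),
      fun s hs => (hact hω' s k (by lia)).2 (huk s hs)⟩, hω'⟩
  · rintro ⟨⟨hy, hu, hyk, huk⟩, hω'⟩
    exact ⟨fun s j hs => (hobs hω' s j (by lia)).1 (hy s j hs),
      fun s j hs => (hact hω' s j (by lia)).1 (hu s j hs),
      fun s hs => (hobs hω' s k hs).1 (hyk s hs),
      fun s hs => (hact hω' s k (by lia)).1 (huk s hs)⟩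

theorem privOthersEq_succ_iff (hT : 1 ≤ T) (hγ : Admissible T γ)
    (hd : SameCommon T t dy du iy iu) (hu : γ k t iy iu = u)
    (hω : InfoEq T γ k t iy iu ω) (ly : ℕ → ∀ j, Y j) (lu : ℕ → ∀ j, U j) :
    PrivOthersEq T γ k (t + 1) ly lu ω ↔
      SamePrivOthers T k (t + 1) (nextSnapshot T γ k t dy du u ω).obs
        (nextSnapshot T γ k t dy du u ω).act ly lu := by
  refine and_congr ?_ ?_
  · refine forall₅_congr fun s j hj hs hst => ?_
    rw [nextSnapshot_obs_of_private hs (by lia)]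
  · refine forall₅_congr fun s j hj hs hst => ?_
    rw [nextSnapshot_act_of_private hT hγ hd hu hω (by lia) (by lia)]

end Snapshot

/-! ### The law of the next private posterior -/

section NextPosterior

variable [∀ k, Nonempty (U k)] [Fintype X] [∀ k, Fintype (Y k)] {M : Kernels X Y U}
  {γ γ₁ γ₂ : Strat Y U} {dy iy iy₁ iy₂ : ℕ → ∀ j, Y j} {du iu iu₁ iu₂ : ℕ → ∀ j, U j} {u : U k}

theorem condPr_snapshot_eq (v : Snapshot X Y U) :
    condPr n M γ (fun ω => snapshot T γ k t dy du ω = v) (InfoEq T γ k t iy iu) =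
      if v.IsPadded T k t dy du then Xi n T M γ k t iy iu v.state v.obs v.act else 0 := by
  simp only [snapshot_eq_iff]
  split_ifs with hv
  · simp only [hv, true_and]
    rfl
  · simp only [hv, false_and, condPr, Pr, if_false, Finset.sum_const_zero, zero_div]

theorem condPr_snapshot_stateObsAt_eq (hT : 1 ≤ T) (hγ : Admissible T γ) (hM : M.IsPMF)
    (ht : t < n) (hd : SameCommon T t dy du iy iu) (hu : γ k t iy iu = u)
    (v : Snapshot X Y U) (z : X × ∀ j, Y j) :
    condPr n M γ (fun ω => (snapshot T γ k t dy du ω, stateObsAt ω (t + 1)) = (v, z))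
        (InfoEq T γ k t iy iu) =
      M.step t v.state (v.jointAction γ k t u) z *
        condPr n M γ (fun ω => snapshot T γ k t dy du ω = v) (InfoEq T γ k t iy iu) := by
  have hpast : DependsOnPast t fun ω : Traj n X Y =>
      snapshot T γ k t dy du ω = v ∧ InfoEq T γ k t iy iu ω := fun ω ω' h =>
    congrArg₂ And (congrArg (· = v) (dependsOnPast_snapshot hT hγ k t dy du h))
      (dependsOnPast_infoEq hT hγ k iy iu h)
  rw [condPr, condPr, ← mul_div_assoc, ← Pr_and_stateObsAt_succ hT hγ hM ht hpast]
  · simp only [Prod.mk.injEq, and_assoc, and_comm (a := stateObsAt _ _ = z)]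
  · rintro ω ⟨rfl, -⟩
    rfl
  · rintro ω ⟨rfl, hω⟩
    exact actAt_eq_jointAction hT hγ hd hu hω

/-- The conditional law of `nextSnapshot` given `I_t^k = i_t^k`. -/
noncomputable def nextLaw (n T : ℕ) (M : Kernels X Y U) (γ : Strat Y U) (k : Fin K) (t : ℕ)
    (dy : ℕ → ∀ j, Y j) (du : ℕ → ∀ j, U j) (u : U k) (iy : ℕ → ∀ j, Y j) (iu : ℕ → ∀ j, U j)
    (P : Snapshot X Y U → Prop) : ℝ :=
  condPr n M γ (fun ω => P (nextSnapshot T γ k t dy du u ω)) (InfoEq T γ k t iy iu)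

theorem nextLaw_congr (hT : 1 ≤ T) (h₁ : Admissible T γ₁) (h₂ : Admissible T γ₂) (hM : M.IsPMF)
    (ht : t < n) (hγ : ∀ j, j ≠ k → γ₁ j t = γ₂ j t)
    (hd₁ : SameCommon T t dy du iy₁ iu₁) (hd₂ : SameCommon T t dy du iy₂ iu₂)
    (hu₁ : γ₁ k t iy₁ iu₁ = u) (hu₂ : γ₂ k t iy₂ iu₂ = u)
    (hXi : ∀ x ly lu, Xi n T M γ₁ k t iy₁ iu₁ x ly lu = Xi n T M γ₂ k t iy₂ iu₂ x ly lu) :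
    nextLaw n T M γ₁ k t dy du u iy₁ iu₁ = nextLaw n T M γ₂ k t dy du u iy₂ iu₂ := by
  funext P
  have hjoint : ∀ w : Snapshot X Y U × (X × ∀ j, Y j),
      condPr n M γ₁ (fun ω => (snapshot T γ₁ k t dy du ω, stateObsAt ω (t + 1)) = w)
          (InfoEq T γ₁ k t iy₁ iu₁) =
        condPr n M γ₂ (fun ω => (snapshot T γ₂ k t dy du ω, stateObsAt ω (t + 1)) = w)
          (InfoEq T γ₂ k t iy₂ iu₂) := by
    rintro ⟨v, z⟩
    rw [condPr_snapshot_stateObsAt_eq hT h₁ hM ht hd₁ hu₁,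
      condPr_snapshot_stateObsAt_eq hT h₂ hM ht hd₂ hu₂, condPr_snapshot_eq,
      condPr_snapshot_eq, v.jointAction_congr hγ, hXi]
  simp only [nextLaw, nextSnapshot, Snapshot.jointAction_congr hγ]
  exact condPr_comp_congr hjoint fun p => P (p.1.advance t (p.1.jointAction γ₂ k t u) p.2)

/-- The private posterior `Ξ_t^k` at the information of `w`, by Bayes' rule, when `(X_t, Λ_t^{-k})`
and `I_t^k` are those recorded by a random snapshot of law `L`. -/
noncomputable def posteriorOfLaw (T : ℕ) (k : Fin K) (t : ℕ) (L : (Snapshot X Y U → Prop) → ℝ)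
    (w : Snapshot X Y U) (x : X) (ly : ℕ → ∀ j, Y j) (lu : ℕ → ∀ j, U j) : ℝ :=
  L (fun w' => (w'.state = x ∧ SamePrivOthers T k t w'.obs w'.act ly lu) ∧
      SameInfo T k t w'.obs w'.act w.obs w.act) /
    L (fun w' => SameInfo T k t w'.obs w'.act w.obs w.act)

theorem XiAt_succ (hT : 1 ≤ T) (hγ : Admissible T γ)
    (hd : SameCommon T t dy du iy iu) (hu : γ k t iy iu = u)
    (hpos : Pr n M γ (InfoEq T γ k t iy iu) ≠ 0) {ω : Traj n X Y} (hω : InfoEq T γ k t iy iu ω) :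
    XiAt n T M γ k (t + 1) ω =
      posteriorOfLaw T k (t + 1) (nextLaw n T M γ k t dy du u iy iu)
        (nextSnapshot T γ k t dy du u ω) := by
  funext x ly lu
  have hinfo : InfoEq T γ k (t + 1) (obsAt ω) (actAt γ ω) = fun ω' => _ :=
    funext fun ω' => propext (infoEq_succ_iff hT hγ hd hu hω)
  change condPr n M γ _ (InfoEq T γ k (t + 1) (obsAt ω) (actAt γ ω)) = _
  rw [hinfo, condPr_and_right hpos]
  refine congrArg (· / _) (condPr_congr fun ω' hω' => and_congr_left' (and_congr_right' ?_))
  exact privOthersEq_succ_iff hT hγ hd hu hω' ly lu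

theorem condPr_XiAt_succ_eq (hT : 1 ≤ T) (hγ : Admissible T γ)
    (hd : SameCommon T t dy du iy iu) (hu : γ k t iy iu = u)
    (hpos : Pr n M γ (InfoEq T γ k t iy iu) ≠ 0)
    (ξ' : X → (ℕ → ∀ j, Y j) → (ℕ → ∀ j, U j) → ℝ) :
    condPr n M γ (fun ω => XiAt n T M γ k (t + 1) ω = ξ') (InfoEq T γ k t iy iu) =
      nextLaw n T M γ k t dy du u iy iu fun w =>
        posteriorOfLaw T k (t + 1) (nextLaw n T M γ k t dy du u iy iu) w = ξ' :=
  condPr_congr fun ω hω => by rw [XiAt_succ hT hγ hd hu hpos hω]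

theorem infoEq_and_actAt_eq_of_pos (hT : 1 ≤ T) (hγ : Admissible T γ)
    (hpos : 0 < Pr n M γ (fun ω => InfoEq T γ k t iy iu ω ∧ actAt γ ω t k = u)) :
    γ k t iy iu = u ∧
      (fun ω : Traj n X Y => InfoEq T γ k t iy iu ω ∧ actAt γ ω t k = u) =
        InfoEq T γ k t iy iu := by
  have hact (ω : Traj n X Y) (hω : InfoEq T γ k t iy iu ω) : actAt γ ω t k = γ k t iy iu :=
    actAt_eq_of_sameInfo hT hγ hω
  obtain ⟨ω, hω⟩ : ∃ ω : Traj n X Y, InfoEq T γ k t iy iu ω ∧ actAt γ ω t k = u := by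
    by_contra! hempty
    refine hpos.ne' (Finset.sum_eq_zero fun ω _ => if_neg ?_)
    exact fun h => hempty ω h.1 h.2
  have hu : γ k t iy iu = u := (hact ω hω.1).symm.trans hω.2
  exact ⟨hu, funext fun ω => propext (and_iff_left_of_imp fun hω => (hact ω hω).trans hu)⟩

theorem private_posterior_conditionally_Markov_general (hT : 1 ≤ T) (hM : M.IsPMF)
    (h₁ : Admissible T γ₁) (h₂ : Admissible T γ₂) (ht : t < n)
    (hγ : ∀ j, j ≠ k → γ₁ j t = γ₂ j t)
    (hpos₁ : 0 < Pr n M γ₁ (fun ω => InfoEq T γ₁ k t iy₁ iu₁ ω ∧ actAt γ₁ ω t k = u))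
    (hpos₂ : 0 < Pr n M γ₂ (fun ω => InfoEq T γ₂ k t iy₂ iu₂ ω ∧ actAt γ₂ ω t k = u))
    (hXi : ∀ x ly lu, Xi n T M γ₁ k t iy₁ iu₁ x ly lu = Xi n T M γ₂ k t iy₂ iu₂ x ly lu)
    (hδy : ∀ s j, s + T ≤ t → iy₁ s j = iy₂ s j) (hδu : ∀ s j, s + T ≤ t → iu₁ s j = iu₂ s j)
    (ξ' : X → (ℕ → ∀ j, Y j) → (ℕ → ∀ j, U j) → ℝ) :
    condPr n M γ₁ (fun ω => XiAt n T M γ₁ k (t + 1) ω = ξ')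
        (fun ω => InfoEq T γ₁ k t iy₁ iu₁ ω ∧ actAt γ₁ ω t k = u) =
      condPr n M γ₂ (fun ω => XiAt n T M γ₂ k (t + 1) ω = ξ')
        (fun ω => InfoEq T γ₂ k t iy₂ iu₂ ω ∧ actAt γ₂ ω t k = u) := by
  obtain ⟨hu₁, hB₁⟩ := infoEq_and_actAt_eq_of_pos hT h₁ hpos₁
  obtain ⟨hu₂, hB₂⟩ := infoEq_and_actAt_eq_of_pos hT h₂ hpos₂
  rw [hB₁] at hpos₁ ⊢
  rw [hB₂] at hpos₂ ⊢
  have hlaw : nextLaw n T M γ₁ k t iy₁ iu₁ u iy₁ iu₁ = nextLaw n T M γ₂ k t iy₁ iu₁ u iy₂ iu₂ :=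
    nextLaw_congr hT h₁ h₂ hM ht hγ (.refl _ _) ⟨hδy, hδu⟩ hu₁ hu₂ hXi
  rw [condPr_XiAt_succ_eq hT h₁ (.refl _ _) hu₁ hpos₁.ne',
    condPr_XiAt_succ_eq hT h₂ ⟨hδy, hδu⟩ hu₂ hpos₂.ne', hlaw]

end NextPosterior

theorem updStrat_of_ne (γ : Strat Y U) (g : SStrat Y U k) {j : Fin K} (hj : j ≠ k) :
    updStrat γ k g j = γ j :=
  dif_neg hj

/-!  STATEMENT 8 (Lemma 4 (1): the private posterior process is conditionally Markov with
respect to the common data, with a transition kernel independent of station `k`'s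
strategy). -/

/-- `ℙ^{γ^k,γ^{-k}}(Ξ_{t+1}^k[I_{t+1}^k] = ξ' | I_t^k = i_t^k, U_t^k = u)` depends on the
conditioning realization only through `(Ξ_t^k[i_t^k], δ_t^{(K)}, u)` and not on the
strategy `γ^k` of station `k`: for two strategies `g₁, g₂` of station `k` (the other
stations' strategies being fixed) and two positive-probability realizations with the same
private posterior `Ξ_t^k`, the same common data `δ_t^{(K)}` and the same action `u`, the
conditional distributions of `Ξ_{t+1}^k` coincide. -/
theorem private_posterior_conditionally_Markov
    {X : Type} [Fintype X] [DecidableEq X] [Nonempty X]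
    {K : ℕ} {Y U : Fin K → Type}
    [∀ k, Fintype (Y k)] [∀ k, DecidableEq (Y k)] [∀ k, Nonempty (Y k)]
    [∀ k, Fintype (U k)] [∀ k, DecidableEq (U k)] [∀ k, Nonempty (U k)]
    (n T : ℕ) (hT : 1 ≤ T) (hTn : T ≤ n)
    (M : Kernels X Y U) (hM : M.IsPMF)
    (γb : Strat Y U) (k : Fin K) (g₁ g₂ : SStrat Y U k)
    (h₁ : Admissible T (updStrat γb k g₁))
    (h₂ : Admissible T (updStrat γb k g₂))
    (t : ℕ) (ht : t < n)
    (iy₁ : ℕ → ∀ j, Y j) (iu₁ : ℕ → ∀ j, U j)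
    (iy₂ : ℕ → ∀ j, Y j) (iu₂ : ℕ → ∀ j, U j) (u : U k)
    (hpos₁ : 0 < Pr n M (updStrat γb k g₁)
      (fun ω => InfoEq T (updStrat γb k g₁) k t iy₁ iu₁ ω ∧
        actAt (updStrat γb k g₁) ω t k = u))
    (hpos₂ : 0 < Pr n M (updStrat γb k g₂)
      (fun ω => InfoEq T (updStrat γb k g₂) k t iy₂ iu₂ ω ∧
        actAt (updStrat γb k g₂) ω t k = u))
    -- same private posterior `Ξ_t^k`
    (hXi : ∀ x ly lu, Xi n T M (updStrat γb k g₁) k t iy₁ iu₁ x ly lu =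
        Xi n T M (updStrat γb k g₂) k t iy₂ iu₂ x ly lu)
    -- same common data `δ_t^{(K)}`
    (hδy : ∀ s (j : Fin K), s + T ≤ t → iy₁ s j = iy₂ s j)
    (hδu : ∀ s (j : Fin K), s + T ≤ t → iu₁ s j = iu₂ s j) :
    ∀ ξ' : X → (ℕ → ∀ j, Y j) → (ℕ → ∀ j, U j) → ℝ,
      condPr n M (updStrat γb k g₁)
        (fun ω => XiAt n T M (updStrat γb k g₁) k (t + 1) ω = ξ')
        (fun ω => InfoEq T (updStrat γb k g₁) k t iy₁ iu₁ ω ∧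
          actAt (updStrat γb k g₁) ω t k = u) =
      condPr n M (updStrat γb k g₂)
        (fun ω => XiAt n T M (updStrat γb k g₂) k (t + 1) ω = ξ')
        (fun ω => InfoEq T (updStrat γb k g₂) k t iy₂ iu₂ ω ∧
          actAt (updStrat γb k g₂) ω t k = u) :=
  private_posterior_conditionally_Markov_general hT hM h₁ h₂ ht
    (fun j hj => by rw [updStrat_of_ne _ _ hj, updStrat_of_ne _ _ hj]) hpos₁ hpos₂ hXi hδy hδu

end DelayedSharing
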